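/- arXiv:1801.08775 — 3 statements merged into one kernel-verified Lean document; each statement's English description precedes it below -/
import Mathlib

section
/- If f : M → M is a positively expansive continuous map of a compact metric space (M, ρ), then there exist a compatible metric d on M (inducing the same topology as ρ), ξ > 0 and λ > 1 such that whenever d(x,y) < ξ one has d(f(x), f(y)) = λ·d(x,y). -/
open Filter Topology

/-!
Let `V` be a closed symmetric entourage such that any two distinct points are separated by `V`
along their orbits, and let `r x y = a ^ n` for the first time `n` at which `fⁿ x` and `fⁿ y` are
not `V`-close. By compactness, points that are not close are separated within a bounded time `q`,
so for `a` close to `1` Frink's chain construction yields a metric `D` with `D ≤ r ≤ 2 * D`. While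
the orbits stay `V`-close each step multiplies `r` by exactly `a⁻¹`, so some iterate `fᵏ` at
least doubles small `D`-distances.

Choose `b < 1` with `2 * b ^ k ≥ 1` and put `d x y = ⨆ n, b ^ n * D (fⁿ x) (fⁿ y)`. Then
`d x y = max (D x y) (b * d (f x) (f y))`, and at small distances the second term dominates because
it is at least `b ^ k * D (fᵏ x) (fᵏ y) ≥ D x y`. Hence `d (f x) (f y) = b⁻¹ * d x y`.
-/

open Dynamics Uniformity
open scoped NNReal SetRel

lemma exists_lt_one_one_le_mul_pow {L : ℝ} (hL : 1 < L) (n : ℕ) :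
    ∃ a : ℝ, 0 < a ∧ a < 1 ∧ 1 ≤ L * a ^ n := by
  have hlim : Tendsto (fun a : ℝ ↦ L * a ^ n) (𝓝[<] 1) (𝓝 (L * 1 ^ n)) :=
    (Continuous.tendsto (by fun_prop) 1).mono_left nhdsWithin_le_nhds
  have hlarge : ∀ᶠ a : ℝ in 𝓝[<] 1, 1 < L * a ^ n :=
    hlim.eventually_const_lt (by simpa using hL)
  obtain ⟨a, ha, ha0, ha1⟩ := (hlarge.and (Ioo_mem_nhdsLT zero_lt_one)).exists
  exact ⟨a, ha0, ha1, ha.le⟩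

lemma exists_metricSpace_dist_le_and_le_two_mul_dist {M : Type*} [u : UniformSpace M]
    (r : M → M → ℝ≥0) (r_self : ∀ x, r x x = 0) (r_comm : ∀ x y, r x y = r y x)
    (eq_of_r_eq_zero : ∀ x y, r x y = 0 → x = y)
    (r_chain : ∀ x y z w, r x w ≤ 2 * max (r x y) (max (r y z) (r z w)))
    (r_basis : (𝓤 M).HasBasis (0 < ·) fun ε : ℝ ↦ {p | (r p.1 p.2 : ℝ) < ε}) :
    ∃ m : MetricSpace M, m.toUniformSpace = u ∧
      ∀ x y, m.dist x y ≤ r x y ∧ r x y ≤ 2 * m.dist x y := by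
  let P := PseudoMetricSpace.ofPreNNDist r r_self r_comm
  have dist_le : ∀ x y, P.dist x y ≤ r x y :=
    PseudoMetricSpace.dist_ofPreNNDist_le r r_self r_comm
  have le_dist : ∀ x y, (r x y : ℝ) ≤ 2 * P.dist x y :=
    PseudoMetricSpace.le_two_mul_dist_ofPreNNDist r r_self r_comm r_chain
  let m : MetricSpace M :=
    { P with
      eq_of_dist_eq_zero := fun {x y} h ↦ eq_of_r_eq_zero x y <| by
        have := le_dist x y
        rw [show P.dist x y = 0 from h, mul_zero] at this
        exact_mod_cast le_antisymm this (r x y).coe_nonneg }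
  have dist_basis : 𝓤[u].HasBasis (0 < ·) fun ε : ℝ ↦ {p | m.dist p.1 p.2 < ε} :=
    r_basis.to_hasBasis
      (fun ε hε ↦ ⟨ε / 2, half_pos hε, fun p (hp : P.dist p.1 p.2 < ε / 2) ↦
        (le_dist p.1 p.2).trans_lt (by linarith)⟩)
      (fun ε hε ↦ ⟨ε, hε, fun p hp ↦ (dist_le p.1 p.2).trans_lt hp⟩)
  exact ⟨m, UniformSpace.ext (Metric.uniformity_basis_dist.eq_of_same_basis dist_basis),
    fun x y ↦ ⟨dist_le x y, le_dist x y⟩⟩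

section Separation

variable {M : Type*} {f : M → M} {V W : SetRel M M} {a : ℝ≥0} {x y : M} {k q : ℕ}

/-- The orbits of any two distinct points fail to be `V`-close at some time. The map `f` is
positively expansive when this holds for some entourage `V`. -/
def SeparatesOrbits (f : M → M) (V : SetRel M M) : Prop :=
  ∀ ⦃x y⦄, x ≠ y → ∃ n, (f^[n] x, f^[n] y) ∉ V

lemma SeparatesOrbits.mono (h : SeparatesOrbits f V) (hWV : W ⊆ V) : SeparatesOrbits f W :=
  fun _ _ hxy ↦ (h hxy).imp fun _ hn hW ↦ hn (hWV hW)

lemma isClosed_dynEntourage [TopologicalSpace M] (hf : Continuous f) (hV : IsClosed V) (n : ℕ) :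
    IsClosed (dynEntourage f V n) :=
  isClosed_biInter fun k _ ↦ hV.preimage ((hf.prodMap hf).iterate k)

lemma SeparatesOrbits.exists_dynEntourage_subset [UniformSpace M] [CompactSpace M]
    (hsep : SeparatesOrbits f V) (hf : Continuous f) (hV : IsClosed V) (hW : W ∈ 𝓤 M) :
    ∃ n, dynEntourage f V n ⊆ W := by
  refine exists_subset_nhds_of_compactSpace (dynEntourage_antitone f V).directed_ge
    (isClosed_dynEntourage hf hV) ?_
  rintro ⟨x, y⟩ hxy
  obtain rfl : x = y := by
    by_contra hne
    obtain ⟨n, hn⟩ := hsep hne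
    exact hn (mem_dynEntourage.1 (Set.mem_iInter.1 hxy (n + 1)) n n.lt_succ_self)
  exact nhds_le_uniformity x hW

/-- For `a ≤ 1` this is `a ^ n`, where `n` is the first time at which the orbits of `x` and `y`
are not `V`-close. It is `0` if there is no such time, the supremum being empty. -/
noncomputable def separationGauge (f : M → M) (V : SetRel M M) (a : ℝ≥0) (x y : M) : ℝ≥0 :=
  ⨆ n : {n : ℕ // (f^[n] x, f^[n] y) ∉ V}, a ^ (n : ℕ)

lemma separationGauge_le {t : ℝ≥0} (h : ∀ n, (f^[n] x, f^[n] y) ∉ V → a ^ n ≤ t) :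
    separationGauge f V a x y ≤ t :=
  ciSup_le' fun n ↦ h n n.2

lemma separationGauge_le_one (ha : a ≤ 1) : separationGauge f V a x y ≤ 1 :=
  separationGauge_le fun _ _ ↦ pow_le_one' ha _

lemma pow_le_separationGauge (ha : a ≤ 1) {n : ℕ} (hn : (f^[n] x, f^[n] y) ∉ V) :
    a ^ n ≤ separationGauge f V a x y :=
  le_ciSup (f := fun n : {n : ℕ // (f^[n] x, f^[n] y) ∉ V} ↦ a ^ (n : ℕ))
    ⟨1, Set.forall_mem_range.2 fun _ ↦ pow_le_one' ha _⟩ ⟨n, hn⟩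

lemma separationGauge_self [V.IsRefl] (x : M) : separationGauge f V a x x = 0 :=
  nonpos_iff_eq_zero.1 (separationGauge_le fun _ hn ↦ absurd (V.refl _) hn)

lemma separationGauge_comm [V.IsSymm] (x y : M) :
    separationGauge f V a x y = separationGauge f V a y x :=
  (Equiv.subtypeEquivRight fun _ ↦ not_congr V.comm).iSup_congr fun _ ↦ rfl

lemma SeparatesOrbits.eq_of_separationGauge_eq_zero (hsep : SeparatesOrbits f V) (ha0 : 0 < a)
    (ha : a ≤ 1) (h : separationGauge f V a x y = 0) : x = y := by
  by_contra hne
  obtain ⟨n, hn⟩ := hsep hne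
  exact ((pow_pos ha0 n).trans_le (pow_le_separationGauge ha hn)).ne' h

lemma mem_dynEntourage_of_separationGauge_lt (ha : a ≤ 1)
    (h : separationGauge f V a x y < a ^ k) : (x, y) ∈ dynEntourage f V k := by
  refine mem_dynEntourage.2 fun n hn ↦ ?_
  by_contra hV
  exact h.not_ge ((pow_le_pow_of_le_one zero_le ha hn.le).trans (pow_le_separationGauge ha hV))

lemma separationGauge_le_pow_mul (ha : a ≤ 1) (h : (x, y) ∈ dynEntourage f V k) :
    separationGauge f V a x y ≤ a ^ k * separationGauge f V a (f^[k] x) (f^[k] y) := by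
  refine separationGauge_le fun n hn ↦ ?_
  obtain ⟨j, rfl⟩ : ∃ j, n = j + k :=
    Nat.exists_eq_add_of_le' (not_lt.1 fun hnk ↦ hn (mem_dynEntourage.1 h n hnk))
  rw [add_comm, pow_add]
  gcongr
  exact pow_le_separationGauge ha (by simpa only [← Function.iterate_add_apply] using hn)

lemma separationGauge_le_pow (ha : a ≤ 1) (h : (x, y) ∈ dynEntourage f V k) :
    separationGauge f V a x y ≤ a ^ k :=
  (separationGauge_le_pow_mul ha h).trans (mul_le_of_le_one_right' (separationGauge_le_one ha))

lemma pow_le_two_mul_separationGauge (ha : a ≤ 1) (haq : 1 ≤ 2 * a ^ q)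
    (hqW : dynEntourage f V q ⊆ W) {n : ℕ} (hn : (f^[n] x, f^[n] y) ∉ W) :
    a ^ n ≤ 2 * separationGauge f V a x y := by
  obtain ⟨j, hjq, hj⟩ : ∃ j < q, (f^[j] (f^[n] x), f^[j] (f^[n] y)) ∉ V := by
    by_contra! h
    exact hn (hqW (mem_dynEntourage.2 h))
  simp only [← Function.iterate_add_apply] at hj
  calc a ^ n ≤ (2 * a ^ q) * a ^ n := le_mul_of_one_le_left' haq
    _ = 2 * a ^ (q + n) := by ring
    _ ≤ 2 * a ^ (j + n) := by gcongr 2 * ?_; exact pow_le_pow_of_le_one zero_le ha (by omega)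
    _ ≤ 2 * separationGauge f V a x y := by gcongr; exact pow_le_separationGauge ha hj

lemma separationGauge_le_two_mul_max (ha : a ≤ 1) (haq : 1 ≤ 2 * a ^ q)
    (hqW : dynEntourage f V q ⊆ W) (hWV : W ○ W ○ W ⊆ V) (x y z w : M) :
    separationGauge f V a x w ≤ 2 * max (separationGauge f V a x y)
      (max (separationGauge f V a y z) (separationGauge f V a z w)) := by
  refine separationGauge_le fun n hn ↦ ?_
  by_cases hxy : (f^[n] x, f^[n] y) ∈ W
  · by_cases hyz : (f^[n] y, f^[n] z) ∈ W
    · have hzw : (f^[n] z, f^[n] w) ∉ W := fun hzw ↦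
        hn (hWV (SetRel.prodMk_mem_comp (SetRel.prodMk_mem_comp hxy hyz) hzw))
      exact (pow_le_two_mul_separationGauge ha haq hqW hzw).trans (by gcongr; simp)
    · exact (pow_le_two_mul_separationGauge ha haq hqW hyz).trans (by gcongr; simp)
  · exact (pow_le_two_mul_separationGauge ha haq hqW hxy).trans (by gcongr; simp)

variable [u : UniformSpace M] [CompactSpace M]

lemma SeparatesOrbits.hasBasis_uniformity_separationGauge (hsep : SeparatesOrbits f V)
    (hf : Continuous f) (hV : V ∈ 𝓤 M) (hVc : IsClosed V) (ha0 : 0 < a) (ha1 : a < 1) :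
    (𝓤 M).HasBasis (0 < ·) fun ε : ℝ ↦ {p | (separationGauge f V a p.1 p.2 : ℝ) < ε} := by
  refine ⟨fun U ↦ ⟨fun hU ↦ ?_, fun ⟨ε, hε, hεU⟩ ↦ ?_⟩⟩
  · obtain ⟨n, hn⟩ := hsep.exists_dynEntourage_subset hf hVc hU
    refine ⟨a ^ n, by positivity, fun p hp ↦
      hn (mem_dynEntourage_of_separationGauge_lt ha1.le ?_)⟩
    exact_mod_cast hp
  · obtain ⟨n, hn⟩ := exists_pow_lt_of_lt_one hε (show (a : ℝ) < 1 from ha1)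
    filter_upwards [dynEntourage_mem_uniformity
      (CompactSpace.uniformContinuous_of_continuous hf) hV n] with p hp
    refine hεU (lt_of_le_of_lt ?_ hn)
    exact_mod_cast separationGauge_le_pow ha1.le hp

lemma SeparatesOrbits.exists_metricSpace_separationGauge [V.IsSymm] (hsep : SeparatesOrbits f V)
    (hf : Continuous f) (hV : V ∈ 𝓤 M) (hVc : IsClosed V) :
    ∃ a : ℝ≥0, 0 < a ∧ a < 1 ∧ ∃ m : MetricSpace M, m.toUniformSpace = u ∧ ∀ x y,
      m.dist x y ≤ separationGauge f V a x y ∧ separationGauge f V a x y ≤ 2 * m.dist x y := by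
  obtain ⟨W, hW, -, hWV⟩ := comp_comp_symm_mem_uniformity_sets hV
  obtain ⟨q, hqW⟩ := hsep.exists_dynEntourage_subset hf hVc hW
  obtain ⟨a, ha0, ha1, haq⟩ := exists_lt_one_one_le_mul_pow one_lt_two q
  lift a to ℝ≥0 using ha0.le
  norm_cast at ha0 ha1 haq
  have : V.IsRefl := isRefl_of_mem_uniformity hV
  exact ⟨a, ha0, ha1, exists_metricSpace_dist_le_and_le_two_mul_dist (separationGauge f V a)
    separationGauge_self separationGauge_comm
    (fun _ _ ↦ hsep.eq_of_separationGauge_eq_zero ha0 ha1.le)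
    (separationGauge_le_two_mul_max ha1.le haq hqW hWV)
    (hsep.hasBasis_uniformity_separationGauge hf hV hVc ha0 ha1)⟩

theorem SeparatesOrbits.exists_metricSpace_two_mul_dist_le_dist_iterate
    (hsep : SeparatesOrbits f V) (hf : Continuous f) (hV : V ∈ 𝓤 M) :
    ∃ m : MetricSpace M, m.toUniformSpace = u ∧ ∃ k ≠ 0, ∃ η > 0, ∀ x y,
      m.dist x y < η → 2 * m.dist x y ≤ m.dist (f^[k] x) (f^[k] y) := by
  obtain ⟨T : SetRel M M, hT, hTc, hTV⟩ := mem_uniformity_isClosed hV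
  have hsepT : SeparatesOrbits f T.symmetrize :=
    hsep.mono (SetRel.symmetrize_subset_self.trans hTV)
  obtain ⟨a, ha0, ha1, m, hm, hdist⟩ := hsepT.exists_metricSpace_separationGauge hf
    (symmetrize_mem_uniformity hT) (hTc.inter (hTc.preimage continuous_swap))
  obtain ⟨k, hk⟩ := exists_pow_lt_of_lt_one (show (0 : ℝ) < 1 / 4 by norm_num)
    (show (a : ℝ) < 1 from ha1)
  refine ⟨m, hm, k, ?_, a ^ k / 2, by positivity, fun x y hxy ↦ ?_⟩
  · rintro rfl
    norm_num at hk
  have hlt : separationGauge f T.symmetrize a x y < a ^ k := by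
    rw [← NNReal.coe_lt_coe, NNReal.coe_pow]
    linarith [(hdist x y).2]
  have hnonneg : 0 ≤ m.dist (f^[k] x) (f^[k] y) := dist_nonneg
  have hstep : m.dist x y ≤ a ^ k * (2 * m.dist (f^[k] x) (f^[k] y)) :=
    calc m.dist x y ≤ separationGauge f T.symmetrize a x y := (hdist x y).1
      _ ≤ a ^ k * separationGauge f T.symmetrize a (f^[k] x) (f^[k] y) := mod_cast
        separationGauge_le_pow_mul ha1.le (mem_dynEntourage_of_separationGauge_lt ha1.le hlt)
      _ ≤ a ^ k * (2 * m.dist (f^[k] x) (f^[k] y)) := by gcongr; exact (hdist _ _).2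
  nlinarith

end Separation

section AdaptedMetric

variable {M : Type*} {f : M → M} {b : ℝ} {x y : M}

/-- The supremum of the distances along the orbits of `x` and `y`, discounted by the factor `b`
at each step. Meant for `0 ≤ b ≤ 1` on a bounded space, where the supremum is finite. -/
noncomputable def discountedDist [PseudoMetricSpace M] (f : M → M) (b : ℝ) (x y : M) : ℝ :=
  ⨆ n : ℕ, b ^ n * dist (f^[n] x) (f^[n] y)

section PseudoMetricSpace

variable [PseudoMetricSpace M]

lemma discountedDist_self (f : M → M) (b : ℝ) (x : M) : discountedDist f b x x = 0 := by
  simp [discountedDist]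

lemma discountedDist_comm (f : M → M) (b : ℝ) (x y : M) :
    discountedDist f b x y = discountedDist f b y x := by
  simp only [discountedDist, dist_comm]

lemma discountedDist_le {t : ℝ} (h : ∀ n, b ^ n * dist (f^[n] x) (f^[n] y) ≤ t) :
    discountedDist f b x y ≤ t :=
  ciSup_le h

variable [BoundedSpace M]

lemma pow_mul_dist_le_discountedDist (hb0 : 0 ≤ b) (hb1 : b ≤ 1) (n : ℕ) :
    b ^ n * dist (f^[n] x) (f^[n] y) ≤ discountedDist f b x y := by
  refine le_ciSup (f := fun n ↦ b ^ n * dist (f^[n] x) (f^[n] y))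
    ⟨Metric.diam (Set.univ : Set M), Set.forall_mem_range.2 fun k ↦ ?_⟩ n
  exact (mul_le_of_le_one_left dist_nonneg (pow_le_one₀ hb0 hb1)).trans
    (Metric.dist_le_diam_of_mem (.all _) (Set.mem_univ _) (Set.mem_univ _))

lemma dist_le_discountedDist (hb0 : 0 ≤ b) (hb1 : b ≤ 1) :
    dist x y ≤ discountedDist f b x y := by
  simpa using pow_mul_dist_le_discountedDist (f := f) hb0 hb1 0

lemma discountedDist_triangle (hb0 : 0 ≤ b) (hb1 : b ≤ 1) (x y z : M) :
    discountedDist f b x z ≤ discountedDist f b x y + discountedDist f b y z :=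
  discountedDist_le fun n ↦
    calc b ^ n * dist (f^[n] x) (f^[n] z)
        ≤ b ^ n * (dist (f^[n] x) (f^[n] y) + dist (f^[n] y) (f^[n] z)) := by
          gcongr; exact dist_triangle ..
      _ ≤ discountedDist f b x y + discountedDist f b y z := by
          rw [mul_add]
          exact add_le_add (pow_mul_dist_le_discountedDist hb0 hb1 n)
            (pow_mul_dist_le_discountedDist hb0 hb1 n)

lemma pow_succ_mul_dist_le_mul_discountedDist (hb0 : 0 ≤ b) (hb1 : b ≤ 1) (n : ℕ) :
    b ^ (n + 1) * dist (f^[n + 1] x) (f^[n + 1] y) ≤ b * discountedDist f b (f x) (f y) := by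
  rw [pow_succ', mul_assoc]
  exact mul_le_mul_of_nonneg_left (pow_mul_dist_le_discountedDist hb0 hb1 n) hb0

lemma discountedDist_eq_max (hb0 : 0 < b) (hb1 : b ≤ 1) :
    discountedDist f b x y = max (dist x y) (b * discountedDist f b (f x) (f y)) := by
  apply le_antisymm
  · refine discountedDist_le fun n ↦ ?_
    cases n with
    | zero => simp
    | succ n => exact le_max_of_le_right (pow_succ_mul_dist_le_mul_discountedDist hb0.le hb1 n)
  · refine max_le (dist_le_discountedDist hb0.le hb1) ((le_div_iff₀' hb0).1 ?_)
    refine discountedDist_le fun n ↦ (le_div_iff₀' hb0).2 ?_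
    rw [← mul_assoc, ← pow_succ']
    exact pow_mul_dist_le_discountedDist hb0.le hb1 (n + 1)

lemma discountedDist_eq_mul_of_dist_le {k : ℕ} (hb0 : 0 < b) (hb1 : b ≤ 1) (hk : k ≠ 0)
    (h : dist x y ≤ b ^ k * dist (f^[k] x) (f^[k] y)) :
    discountedDist f b x y = b * discountedDist f b (f x) (f y) := by
  obtain ⟨n, rfl⟩ := Nat.exists_eq_succ_of_ne_zero hk
  rw [discountedDist_eq_max hb0 hb1]
  exact max_eq_right (h.trans (pow_succ_mul_dist_le_mul_discountedDist hb0.le hb1 n))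

lemma setOf_discountedDist_lt_mem_uniformity (hf : UniformContinuous f) (hb0 : 0 ≤ b)
    (hb1 : b < 1) {ε : ℝ} (hε : 0 < ε) : {p : M × M | discountedDist f b p.1 p.2 < ε} ∈ 𝓤 M := by
  set Δ := Metric.diam (Set.univ : Set M)
  obtain ⟨K, hK⟩ : ∃ K : ℕ, b ^ K * Δ < ε / 2 := by
    have hlim : Tendsto (fun K : ℕ ↦ b ^ K * Δ) atTop (𝓝 (0 * Δ)) :=
      (tendsto_pow_atTop_nhds_zero_of_lt_one hb0 hb1).mul_const Δ
    exact (hlim.eventually_lt_const (by simpa using hε)).exists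
  filter_upwards [dynEntourage_mem_uniformity hf (Metric.dist_mem_uniformity (half_pos hε)) K]
    with ⟨x, y⟩ hxy
  refine (discountedDist_le fun n ↦ ?_).trans_lt (half_lt_self hε)
  rcases lt_or_ge n K with hn | hn
  · exact (mul_le_of_le_one_left dist_nonneg (pow_le_one₀ hb0 hb1.le)).trans
      (mem_dynEntourage.1 hxy n hn).le
  · calc b ^ n * dist (f^[n] x) (f^[n] y) ≤ b ^ K * Δ :=
        mul_le_mul (pow_le_pow_of_le_one hb0 hb1.le hn)
          (Metric.dist_le_diam_of_mem (.all _) (Set.mem_univ _) (Set.mem_univ _))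
          dist_nonneg (pow_nonneg hb0 K)
      _ ≤ ε / 2 := hK.le

lemma hasBasis_uniformity_discountedDist (hf : UniformContinuous f) (hb0 : 0 ≤ b) (hb1 : b < 1) :
    (𝓤 M).HasBasis (0 < ·) fun ε : ℝ ↦ {p | discountedDist f b p.1 p.2 < ε} :=
  Metric.uniformity_basis_dist.to_hasBasis
    (fun ε hε ↦ ⟨ε, hε, fun _ hp ↦ (dist_le_discountedDist hb0 hb1.le).trans_lt hp⟩)
    (fun _ hε ↦ Metric.uniformity_basis_dist.mem_iff.1
      (setOf_discountedDist_lt_mem_uniformity hf hb0 hb1 hε))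

end PseudoMetricSpace

theorem exists_metricSpace_dist_map_eq_mul [m₀ : MetricSpace M] [BoundedSpace M]
    (hf : UniformContinuous f) {L η : ℝ} {k : ℕ} (hL : 1 < L) (hη : 0 < η) (hk : k ≠ 0)
    (hexpand : ∀ x y, dist x y < η → L * dist x y ≤ dist (f^[k] x) (f^[k] y)) :
    ∃ m : MetricSpace M, m.toUniformSpace = m₀.toUniformSpace ∧
      ∃ ξ > (0 : ℝ), ∃ lam > (1 : ℝ), ∀ x y, m.dist x y < ξ →
        m.dist (f x) (f y) = lam * m.dist x y := by
  obtain ⟨b, hb0, hb1, hLb⟩ := exists_lt_one_one_le_mul_pow hL k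
  have hscale : ∀ x y, discountedDist f b x y < η →
      discountedDist f b x y = b * discountedDist f b (f x) (f y) := fun x y hxy ↦
    discountedDist_eq_mul_of_dist_le hb0 hb1.le hk <|
      calc dist x y ≤ (L * b ^ k) * dist x y := le_mul_of_one_le_left dist_nonneg hLb
        _ = b ^ k * (L * dist x y) := by ring
        _ ≤ b ^ k * dist (f^[k] x) (f^[k] y) := by
          gcongr
          exact hexpand x y ((dist_le_discountedDist hb0.le hb1.le).trans_lt hxy)
  have hbasis := hasBasis_uniformity_discountedDist hf hb0.le hb1
  let m : MetricSpace M :=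
    { dist := discountedDist f b
      dist_self := discountedDist_self f b
      dist_comm := discountedDist_comm f b
      dist_triangle := discountedDist_triangle hb0.le hb1.le
      eq_of_dist_eq_zero := fun h ↦
        dist_le_zero.1 ((dist_le_discountedDist hb0.le hb1.le).trans_eq h) }
  exact ⟨m, UniformSpace.ext (Metric.uniformity_basis_dist.eq_of_same_basis hbasis),
    η, hη, b⁻¹, (one_lt_inv₀ hb0).2 hb1, fun x y hxy ↦
      (eq_inv_mul_iff_mul_eq₀ hb0.ne').2 (hscale x y hxy).symm⟩

end AdaptedMetric

theorem stmt_1_general {M : Type*} [u : UniformSpace M] [CompactSpace M] {f : M → M}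
    (hf : Continuous f) {V : SetRel M M} (hV : V ∈ 𝓤 M) (hsep : SeparatesOrbits f V) :
    ∃ m : MetricSpace M, m.toUniformSpace = u ∧
      ∃ ξ > (0 : ℝ), ∃ lam > (1 : ℝ), ∀ x y, m.dist x y < ξ →
        m.dist (f x) (f y) = lam * m.dist x y := by
  obtain ⟨m, rfl, k, hk, η, hη, hexpand⟩ :=
    hsep.exists_metricSpace_two_mul_dist_le_dist_iterate hf hV
  exact exists_metricSpace_dist_map_eq_mul (CompactSpace.uniformContinuous_of_continuous hf)
    one_lt_two hη hk hexpand

/-- every positively expansive continuous map of a compact metric space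
admits a compatible metric that exactly expands small distances. -/
theorem stmt_1 {M : Type*} [m : MetricSpace M] [CompactSpace M]
    (f : M → M) (hf : Continuous f)
    (c : ℝ) (hc : 0 < c)
    (hexp : ∀ x y : M, x ≠ y → ∃ n : ℕ, c < dist (f^[n] x) (f^[n] y)) :
    ∃ m' : MetricSpace M,
      m'.toUniformSpace.toTopologicalSpace = m.toUniformSpace.toTopologicalSpace ∧
      ∃ ξ > (0 : ℝ), ∃ lam > (1 : ℝ), ∀ x y : M,
        m'.dist x y < ξ → m'.dist (f x) (f y) = lam * m'.dist x y := by
  obtain ⟨m', hm', h⟩ := stmt_1_general hf (V := {p | dist p.1 p.2 ≤ c})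
    (mem_of_superset (Metric.dist_mem_uniformity hc) fun _ ↦ le_of_lt (α := ℝ))
    fun x y hxy ↦ (hexp x y hxy).imp fun _ ↦ not_le_of_gt
  exact ⟨m', congrArg (·.toTopologicalSpace) hm', h⟩
end

section
/- Let f be an expansive homeomorphism of a compact metric space (M,d) with expansivity constant ξ, where d is self-similar for f with expanding factor λ > 1 and constant ξ. Then for all ε > 0 there is δ > 0 such that for any critical triangle (x,y,z) with d(x,y) < δ, setting a = d(x,z) and b = d(z,y), one has 1/λ² − ε ≤ a/b ≤ 1 + ε. -/
open Filter Topology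

/-!
By self-similarity each pair of nearby points is stretched by exactly `λ` by `f` or by `f⁻¹`, and
once `f` stretches a pair it keeps doing so as long as the orbits stay `ξ`-close. In particular
pairs on a local stable set are contracted by exactly `λ`.

In a critical triangle the sides `(x, y)` and `(z, y)` are both stretched by `f⁻ⁿ` while the third
side `(x, z)` shrinks by `λⁿ`, so the triangle inequality for the images gives
`|d(x, y) - b| ≤ a / λ²ⁿ`. The same argument for the forward iterates of `(f x, f y, f z)` gives
`|d(f x, f y) / λ - a| ≤ b / λ²ⁿ`. Since `d(x, y) / λ² ≤ d(f x, f y) / λ ≤ d(x, y)`, the ratio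
`a / b` lies in `[1 / λ² - 3 / λ²ⁿ, 1 + 3 / λ²ⁿ]`, and `n` may be taken large when `d(x, y)` is
small.
-/

section PseudoMetricSpace

variable {M : Type*} [PseudoMetricSpace M]

/-- The (pseudo)metric of `M` is self-similar for `f` with expanding factor `lam` and
constant `ξ`. -/
def IsSelfSimilar (f : Equiv.Perm M) (ξ lam : ℝ) : Prop :=
  ∀ p q : M, dist p q ≤ ξ →
    max (dist (f p) (f q)) (dist (f.symm p) (f.symm q)) = lam * dist p q

/-- The local stable set `W^s_r(x)` of `f`. The local unstable set `W^u_r(x)` is the local stable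
set of `f.symm`. -/
def localStableSet (f : Equiv.Perm M) (r : ℝ) (x : M) : Set M :=
  {y | ∀ n : ℕ, dist ((f ^ n) x) ((f ^ n) y) ≤ r}

/-- `(x, y)` is a critical pair: `f⁻¹` stretches `(x, y)` by `lam`, and `f` stretches
`(f x, f y)` by `lam`. -/
structure IsCriticalPair (f : Equiv.Perm M) (ξ lam : ℝ) (x y : M) : Prop where
  dist_pos : 0 < dist x y
  dist_lt : dist x y < ξ
  dist_symm_apply : dist (f.symm x) (f.symm y) = lam * dist x y
  dist_apply_apply : dist (f (f x)) (f (f y)) = lam * dist (f x) (f y)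

/-- `(x, y, z)` is a critical triangle: `(x, y)` is a critical pair and `z` lies on the local
unstable set of `x` and on the local stable set of `y`. -/
structure IsCriticalTriangle (f : Equiv.Perm M) (ξ lam : ℝ) (x y z : M) : Prop
    extends IsCriticalPair f ξ lam x y where
  mem_unstable : z ∈ localStableSet f.symm (ξ / (2 * lam)) x
  mem_stable : z ∈ localStableSet f (ξ / (2 * lam)) y

section LocalStableSet

variable {g : Equiv.Perm M} {r : ℝ} {p q : M}

theorem localStableSet_mono {s : ℝ} (hrs : r ≤ s) : localStableSet g r p ⊆ localStableSet g s p :=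
  fun _ hq n ↦ (hq n).trans hrs

theorem dist_le_of_mem_localStableSet (hq : q ∈ localStableSet g r p) : dist p q ≤ r :=
  hq 0

theorem pow_apply_mem_localStableSet (hq : q ∈ localStableSet g r p) (n : ℕ) :
    (g ^ n) q ∈ localStableSet g r ((g ^ n) p) := fun m ↦ by
  simpa only [pow_add, Equiv.Perm.mul_apply] using hq (m + n)

end LocalStableSet

namespace IsSelfSimilar

variable {g : Equiv.Perm M} {ξ lam : ℝ} {p q z : M}

protected theorem symm (h : IsSelfSimilar g ξ lam) : IsSelfSimilar g.symm ξ lam :=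
  fun p q hpq ↦ (max_comm _ _).trans (h p q hpq)

theorem dist_apply_le (h : IsSelfSimilar g ξ lam) (hpq : dist p q ≤ ξ) :
    dist (g p) (g q) ≤ lam * dist p q :=
  (le_max_left _ _).trans_eq (h p q hpq)

theorem dist_le_mul_dist_apply (h : IsSelfSimilar g ξ lam) (hpq : dist (g p) (g q) ≤ ξ) :
    dist p q ≤ lam * dist (g p) (g q) := by
  simpa using h.symm.dist_apply_le hpq

theorem dist_pow_apply_le (h : IsSelfSimilar g ξ lam) (hlam : 1 ≤ lam) {n : ℕ}
    (hn : lam ^ n * dist p q ≤ ξ) : dist ((g ^ n) p) ((g ^ n) q) ≤ lam ^ n * dist p q := by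
  induction n with
  | zero => simp
  | succ n ih =>
    have hn' : lam ^ n * dist p q ≤ ξ := le_trans (by gcongr; exact n.le_succ) hn
    simp only [pow_succ' g, Equiv.Perm.mul_apply]
    calc dist (g ((g ^ n) p)) (g ((g ^ n) q)) ≤ lam * dist ((g ^ n) p) ((g ^ n) q) :=
          h.dist_apply_le ((ih hn').trans hn')
      _ ≤ lam * (lam ^ n * dist p q) := by gcongr; exact ih hn'
      _ = lam ^ (n + 1) * dist p q := by ring

theorem dist_apply_apply_eq (h : IsSelfSimilar g ξ lam) (hlam : 1 < lam)
    (hpq : dist (g p) (g q) = lam * dist p q) (hle : dist (g p) (g q) ≤ ξ) :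
    dist (g (g p)) (g (g q)) = lam * dist (g p) (g q) := by
  have hmax := h (g p) (g q) hle
  rw [Equiv.symm_apply_apply, Equiv.symm_apply_apply] at hmax
  rcases (dist_nonneg (x := p) (y := q)).eq_or_lt with hzero | hpos
  · rwa [← hzero, max_eq_left dist_nonneg] at hmax
  · have hback : dist p q < lam * dist (g p) (g q) := by
      rw [hpq, ← mul_assoc]
      exact lt_mul_of_one_lt_left hpos (one_lt_mul_of_lt_of_le hlam hlam.le)
    exact (max_eq_iff.mp hmax).resolve_right (fun hmax' ↦ hback.ne hmax'.1) |>.1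

theorem dist_pow_apply_eq (h : IsSelfSimilar g ξ lam) (hlam : 1 < lam)
    (hpq : dist (g p) (g q) = lam * dist p q) {n : ℕ}
    (hn : ∀ k < n, dist ((g ^ k) p) ((g ^ k) q) ≤ ξ) :
    dist ((g ^ n) p) ((g ^ n) q) = lam ^ n * dist p q := by
  have hstretch_succ : ∀ k < n,
      dist ((g ^ (k + 1)) p) ((g ^ (k + 1)) q) = lam * dist ((g ^ k) p) ((g ^ k) q) := by
    intro k
    induction k with
    | zero => exact fun _ ↦ by simpa using hpq
    | succ k ih =>
      intro hk
      have hle := hn (k + 1) hk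
      specialize ih (by omega)
      simp only [pow_succ' g, Equiv.Perm.mul_apply] at ih hle ⊢
      exact h.dist_apply_apply_eq hlam ih hle
  induction n with
  | zero => simp
  | succ n ih =>
    rw [hstretch_succ n n.lt_succ_self,
      ih (fun k hk ↦ hn k (by omega)) (fun k hk ↦ hstretch_succ k (by omega))]
    ring

theorem dist_symm_apply_eq_of_mem_localStableSet (h : IsSelfSimilar g ξ lam) (hlam : 1 < lam)
    (hq : q ∈ localStableSet g ξ p) : dist (g.symm p) (g.symm q) = lam * dist p q := by
  have hmax := h p q (dist_le_of_mem_localStableSet hq)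
  rcases (dist_nonneg (x := p) (y := q)).eq_or_lt with hzero | hpos
  · rw [← hzero, mul_zero] at hmax ⊢
    exact dist_nonneg.antisymm' ((le_max_right _ _).trans_eq hmax)
  refine ((max_eq_iff.mp hmax).resolve_left fun hexpand ↦ ?_).1
  obtain ⟨n, hn⟩ := pow_unbounded_of_one_lt (ξ / dist p q) hlam
  rw [div_lt_iff₀ hpos, ← h.dist_pow_apply_eq hlam hexpand.1 fun k _ ↦ hq k] at hn
  exact hn.not_ge (hq n)

theorem pow_mul_dist_pow_apply_of_mem_localStableSet (h : IsSelfSimilar g ξ lam) (hlam : 1 < lam)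
    (hq : q ∈ localStableSet g ξ p) (n : ℕ) :
    lam ^ n * dist ((g ^ n) p) ((g ^ n) q) = dist p q := by
  induction n with
  | zero => simp
  | succ n ih =>
    have hcontract := h.dist_symm_apply_eq_of_mem_localStableSet hlam
      (pow_apply_mem_localStableSet hq (n + 1))
    simp only [pow_succ' g, Equiv.Perm.mul_apply, Equiv.symm_apply_apply] at hcontract ⊢
    rw [← ih, hcontract]
    ring

theorem pow_mul_abs_dist_sub_dist_le (h : IsSelfSimilar g ξ lam) (hlam : 1 < lam)
    (hpq : dist (g p) (g q) = lam * dist p q) (hpz : dist (g p) (g z) = lam * dist p z)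
    (hz : z ∈ localStableSet g (ξ / 2) q) {n : ℕ} (hn : lam ^ n * dist p q ≤ ξ / 2) :
    lam ^ (2 * n) * |dist p q - dist p z| ≤ dist q z := by
  have hξ : ξ / 2 ≤ ξ := half_le_self <| by
    linarith [dist_nonneg.trans (dist_le_of_mem_localStableSet hz)]
  have hclose : ∀ k < n, dist ((g ^ k) p) ((g ^ k) q) ≤ ξ / 2 := fun k hk ↦ by
    have hk' : lam ^ k * dist p q ≤ ξ / 2 := le_trans (by gcongr; exact hlam.le) hn
    exact (h.dist_pow_apply_le hlam.le (hk'.trans hξ)).trans hk'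
  have hpq_n := h.dist_pow_apply_eq hlam hpq fun k hk ↦ (hclose k hk).trans hξ
  have hpz_n := h.dist_pow_apply_eq hlam hpz fun k hk ↦
    calc dist ((g ^ k) p) ((g ^ k) z)
        ≤ dist ((g ^ k) p) ((g ^ k) q) + dist ((g ^ k) q) ((g ^ k) z) := dist_triangle _ _ _
      _ ≤ ξ / 2 + ξ / 2 := add_le_add (hclose k hk) (hz k)
      _ = ξ := add_halves ξ
  calc lam ^ (2 * n) * |dist p q - dist p z|
      = lam ^ n * |lam ^ n * dist p q - lam ^ n * dist p z| := by
        rw [← mul_sub, abs_mul, abs_of_pos (a := lam ^ n) (by positivity)]; ring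
    _ = lam ^ n * |dist ((g ^ n) q) ((g ^ n) p) - dist ((g ^ n) z) ((g ^ n) p)| := by
        rw [← hpq_n, ← hpz_n, dist_comm ((g ^ n) p), dist_comm ((g ^ n) p)]
    _ ≤ lam ^ n * dist ((g ^ n) q) ((g ^ n) z) := by
        gcongr; exact abs_dist_sub_le _ _ _
    _ = dist q z :=
        h.pow_mul_dist_pow_apply_of_mem_localStableSet hlam (localStableSet_mono hξ hz) n

end IsSelfSimilar

theorem div_mem_Icc_of_abs_sub_le {a b c d e κ : ℝ} (hd : 0 < d) (ha : 0 ≤ a) (hc : 3 ≤ c)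
    (hκ₀ : 0 ≤ κ) (hκ₁ : κ ≤ 1) (hdb : c * |d - b| ≤ a) (hea : c * |e - a| ≤ b)
    (hκe : κ * d ≤ e) (hed : e ≤ d) : a / b ∈ Set.Icc (κ - 3 / c) (1 + 3 / c) := by
  have hc₀ : 0 < c := by linarith
  have hb : 0 ≤ b := le_trans (by positivity) hea
  rw [← le_div_iff₀' hc₀, abs_le] at hdb hea
  have ha_third : a / c ≤ a / 3 := by gcongr
  have hb_third : b / c ≤ b / 3 := by gcongr
  have hab : a ≤ 2 * b := by linarith
  have hb_pos : 0 < b := by linarith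
  have hac : a / c ≤ 2 * b / c := by gcongr
  rw [Set.mem_Icc, le_div_iff₀ hb_pos, div_le_iff₀ hb_pos]
  constructor
  · have hκd : κ * (b - a / c) ≤ κ * d := by gcongr; linarith
    have hκa : κ * (a / c) ≤ a / c := mul_le_of_le_one_left (by positivity) hκ₁
    linear_combination hκe + hea.2 + hκd + hκa + hac
  · linear_combination hea.1 + hed + hdb.2 + hac

theorem IsCriticalPair.const_pos {f : Equiv.Perm M} {ξ lam : ℝ} {x y : M}
    (hxy : IsCriticalPair f ξ lam x y) : 0 < ξ :=
  hxy.dist_pos.trans hxy.dist_lt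

namespace IsCriticalTriangle

variable {f : Equiv.Perm M} {ξ lam : ℝ} {x y z : M} {n : ℕ}

theorem mem_unstable_half (ht : IsCriticalTriangle f ξ lam x y z) (hlam : 1 ≤ lam) :
    z ∈ localStableSet f.symm (ξ / 2) x := by
  have hξ : 0 ≤ ξ := ht.const_pos.le
  exact localStableSet_mono (by gcongr; linarith) ht.mem_unstable

theorem mem_stable_half (ht : IsCriticalTriangle f ξ lam x y z) (hlam : 1 ≤ lam) :
    z ∈ localStableSet f (ξ / 2) y := by
  have hξ : 0 ≤ ξ := ht.const_pos.le
  exact localStableSet_mono (by gcongr; linarith) ht.mem_stable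

theorem dist_symm_apply_stable_side (ht : IsCriticalTriangle f ξ lam x y z)
    (h : IsSelfSimilar f ξ lam) (hlam : 1 < lam) :
    dist (f.symm y) (f.symm z) = lam * dist y z :=
  h.dist_symm_apply_eq_of_mem_localStableSet hlam <|
    localStableSet_mono (half_le_self ht.const_pos.le)
      (ht.mem_stable_half hlam.le)

theorem dist_apply_unstable_side (ht : IsCriticalTriangle f ξ lam x y z)
    (h : IsSelfSimilar f ξ lam) (hlam : 1 < lam) : dist (f x) (f z) = lam * dist x z :=
  h.symm.dist_symm_apply_eq_of_mem_localStableSet hlam <|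
    localStableSet_mono (half_le_self ht.const_pos.le)
      (ht.mem_unstable_half hlam.le)

theorem pow_mul_abs_dist_sub_stable_side_le (ht : IsCriticalTriangle f ξ lam x y z)
    (h : IsSelfSimilar f ξ lam) (hlam : 1 < lam) (hn : lam ^ n * dist x y ≤ ξ / 2) :
    lam ^ (2 * n) * |dist x y - dist z y| ≤ dist x z := by
  have hyx : dist (f.symm y) (f.symm x) = lam * dist y x := by
    simpa only [dist_comm] using ht.dist_symm_apply
  rw [dist_comm x y] at hn ⊢
  rw [dist_comm z y]
  exact h.symm.pow_mul_abs_dist_sub_dist_le hlam hyx (ht.dist_symm_apply_stable_side h hlam)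
    (ht.mem_unstable_half hlam.le) hn

theorem pow_mul_abs_dist_apply_sub_unstable_side_le (ht : IsCriticalTriangle f ξ lam x y z)
    (h : IsSelfSimilar f ξ lam) (hlam : 1 < lam) (hn : lam ^ (n + 1) * dist x y ≤ ξ / 2) :
    lam ^ (2 * n) * |dist (f x) (f y) / lam - dist x z| ≤ dist z y := by
  have hlam₀ : 0 < lam := one_pos.trans hlam
  have hstretch := ht.dist_apply_unstable_side h hlam
  have hclose : dist (f x) (f z) ≤ ξ :=
    calc dist (f x) (f z) = lam * dist x z := hstretch
      _ ≤ lam * (ξ / (2 * lam)) := by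
          gcongr; exact dist_le_of_mem_localStableSet ht.mem_unstable
      _ = ξ / 2 := by field_simp
      _ ≤ ξ := half_le_self ht.const_pos.le
  have hn' : lam ^ n * dist (f x) (f y) ≤ ξ / 2 :=
    calc lam ^ n * dist (f x) (f y) ≤ lam ^ n * (lam * dist x y) := by
          gcongr; exact h.dist_apply_le ht.dist_lt.le
      _ = lam ^ (n + 1) * dist x y := by ring
      _ ≤ ξ / 2 := hn
  have hstable := ht.mem_stable_half hlam.le
  have hshrink : dist (f y) (f z) ≤ lam * dist z y := by
    rw [dist_comm z y]
    exact h.dist_apply_le <| (dist_le_of_mem_localStableSet hstable).trans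
      (half_le_self ht.const_pos.le)
  have hcompare := h.pow_mul_abs_dist_sub_dist_le hlam ht.dist_apply_apply
    (h.dist_apply_apply_eq hlam hstretch hclose) (pow_apply_mem_localStableSet hstable 1) hn'
  refine le_of_mul_le_mul_left ?_ hlam₀
  calc lam * (lam ^ (2 * n) * |dist (f x) (f y) / lam - dist x z|)
      = lam ^ (2 * n) * |lam * (dist (f x) (f y) / lam - dist x z)| := by
        rw [abs_mul, abs_of_pos hlam₀]; ring
    _ = lam ^ (2 * n) * |dist (f x) (f y) - dist (f x) (f z)| := by
        rw [mul_sub, mul_div_cancel₀ _ hlam₀.ne', hstretch]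
    _ ≤ dist (f y) (f z) := hcompare
    _ ≤ lam * dist z y := hshrink

theorem dist_div_dist_mem_Icc (ht : IsCriticalTriangle f ξ lam x y z)
    (h : IsSelfSimilar f ξ lam) (hlam : 1 < lam) (hthree : 3 ≤ lam ^ (2 * n))
    (hn : lam ^ (n + 1) * dist x y ≤ ξ / 2) :
    dist x z / dist z y ∈
      Set.Icc (1 / lam ^ 2 - 3 / lam ^ (2 * n)) (1 + 3 / lam ^ (2 * n)) := by
  have hlam₀ : 0 < lam := one_pos.trans hlam
  have happly : dist (f x) (f y) ≤ lam * dist x y := h.dist_apply_le ht.dist_lt.le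
  have hle : ∀ k ≤ n + 1, lam ^ k * dist x y ≤ ξ / 2 := fun k hk ↦
    le_trans (by gcongr; exact hlam.le) hn
  have hξ : ξ / 2 ≤ ξ := half_le_self ht.const_pos.le
  have hclose : dist (f x) (f y) ≤ ξ :=
    (happly.trans (by simpa only [pow_one] using hle 1 (by omega))).trans hξ
  refine div_mem_Icc_of_abs_sub_le ht.dist_pos dist_nonneg hthree (by positivity)
    (div_le_one_of_le₀ (one_le_pow₀ hlam.le) (by positivity))
    (ht.pow_mul_abs_dist_sub_stable_side_le h hlam (hle n n.le_succ))
    (ht.pow_mul_abs_dist_apply_sub_unstable_side_le h hlam hn) ?_ ((div_le_iff₀' hlam₀).mpr happly)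
  calc 1 / lam ^ 2 * dist x y ≤ 1 / lam ^ 2 * (lam * dist (f x) (f y)) := by
        gcongr; exact h.dist_le_mul_dist_apply hclose
    _ = dist (f x) (f y) / lam := by field_simp

end IsCriticalTriangle

theorem stmt_6_general {f : Equiv.Perm M} {ξ lam : ℝ} (hξ : 0 < ξ) (hlam : 1 < lam)
    (h : IsSelfSimilar f ξ lam) {ε : ℝ} (hε : 0 < ε) :
    ∃ δ > 0, ∀ x y z : M, IsCriticalTriangle f ξ lam x y z → dist x y < δ →
      1 / lam ^ 2 - ε ≤ dist x z / dist z y ∧ dist x z / dist z y ≤ 1 + ε := by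
  obtain ⟨n, hn⟩ := pow_unbounded_of_one_lt (max 3 (3 / ε)) (one_lt_pow₀ hlam two_ne_zero)
  rw [← pow_mul, max_lt_iff] at hn
  have herror : 3 / lam ^ (2 * n) ≤ ε := div_le_of_le_mul₀ (by positivity) hε.le
    ((div_le_iff₀' hε).mp hn.2.le)
  refine ⟨ξ / 2 / lam ^ (n + 1), by positivity, fun x y z ht hxy ↦ ?_⟩
  rw [lt_div_iff₀' (by positivity)] at hxy
  obtain ⟨hlower, hupper⟩ := ht.dist_div_dist_mem_Icc h hlam hn.1.le hxy.le
  exact ⟨by linarith, by linarith⟩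

end PseudoMetricSpace

theorem stmt_6 {M : Type*} [MetricSpace M] [CompactSpace M]
    (f : Equiv.Perm M) (hf : Continuous f) (hf' : Continuous f.symm)
    (ξ lam : ℝ) (hξ : 0 < ξ) (hlam : 1 < lam)
    (hexp : ∀ x y : M, x ≠ y → ∃ n : ℤ, ξ < dist ((f ^ n) x) ((f ^ n) y))
    (hss : ∀ p q : M, dist p q ≤ ξ →
      max (dist (f p) (f q)) (dist (f.symm p) (f.symm q)) = lam * dist p q) :
    ∀ ε > (0 : ℝ), ∃ δ > (0 : ℝ), ∀ x y z : M,
      (∀ n : ℕ, dist ((f.symm ^ n) x) ((f.symm ^ n) z) ≤ ξ / (2 * lam)) →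
      (∀ n : ℕ, dist ((f ^ n) y) ((f ^ n) z) ≤ ξ / (2 * lam)) →
      0 < dist x y → dist x y < ξ →
      dist (f.symm x) (f.symm y) = lam * dist x y →
      dist (f (f x)) (f (f y)) = lam * dist (f x) (f y) →
      dist x y < δ →
      1 / lam ^ 2 - ε ≤ dist x z / dist z y ∧ dist x z / dist z y ≤ 1 + ε := by
  intro ε hε
  obtain ⟨δ, hδ, hratio⟩ := stmt_6_general hξ hlam hss hε
  exact ⟨δ, hδ, fun x y z hu hs hpos hlt hsymm happly ↦
    hratio x y z ⟨⟨hpos, hlt, hsymm, happly⟩, hu, hs⟩⟩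
end

section
/- Let f be an expansive homeomorphism of a compact metric space (M,d) with expansivity constant ξ, where d is self-similar for f with expanding factor λ > 1 and constant ξ. Then for every integer k ≥ 0 and every subset X ⊆ M, cov_{ξ/λᵏ}(X, d) = cov_ξ(X, dᶠₖ). -/
open Filter Topology

/-- Diameter of a set with respect to an arbitrary "metric" `ρ`. -/
noncomputable def rdiam {M : Type*} (ρ : M → M → ℝ) (A : Set M) : ℝ :=
  sSup {r : ℝ | ∃ a ∈ A, ∃ b ∈ A, r = ρ a b}

/-- Minimal cardinality of a finite cover of `X` by sets of `ρ`-diameter `< ε`. -/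
noncomputable def covN {M : Type*} (X : Set M) (ρ : M → M → ℝ) (ε : ℝ) : ℕ :=
  sInf {n : ℕ | ∃ U : Fin n → Set M, X ⊆ (⋃ i, U i) ∧ ∀ i, rdiam ρ (U i) < ε}

/-- `dᶠₙ(x,y) = max_{|k| ≤ n} d(fᵏ x, fᵏ y)`. -/
noncomputable def dFn {M : Type*} [MetricSpace M] (f : Equiv.Perm M) (n : ℕ) (x y : M) : ℝ :=
  sSup {r : ℝ | ∃ k : ℤ, |k| ≤ (n : ℤ) ∧ r = dist ((f ^ k) x) ((f ^ k) y)}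

/-!
A metric that is self-similar for `f` with factor `λ ≥ 1` satisfies `dᶠ₁ = λ d` at scale `ξ`.
Since `dᶠₙ₊₁(x, y)` is the maximum of `dᶠ₁(fⁱ x, fⁱ y)` over `|i| ≤ n`, it equals `λ dᶠₙ(x, y)` as
long as `dᶠₙ(x, y) ≤ ξ`. Hence `dᶠₙ = λⁿ d` wherever `d ≤ ξ / λⁿ` or `dᶠₙ ≤ ξ`, so a set has
`d`-diameter `< ξ / λⁿ` exactly when it has `dᶠₙ`-diameter `< ξ`, and both covering numbers
minimise over the same covers.
-/

section CoveringNumber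

variable {M : Type*} {ρ σ : M → M → ℝ} {A : Set M}

theorem rdiam_congr (h : ∀ a ∈ A, ∀ b ∈ A, ρ a b = σ a b) : rdiam ρ A = rdiam σ A := by
  unfold rdiam
  congr 1
  ext r
  refine exists_congr fun a ↦ and_congr_right fun ha ↦ exists_congr fun b ↦
    and_congr_right fun hb ↦ ?_
  rw [h a ha b hb]

open scoped Pointwise in
theorem rdiam_const_mul {c : ℝ} (hc : 0 ≤ c) (ρ : M → M → ℝ) (A : Set M) :
    rdiam (fun a b ↦ c * ρ a b) A = c * rdiam ρ A := by
  have image_eq : {r : ℝ | ∃ a ∈ A, ∃ b ∈ A, r = c * ρ a b} =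
      c • {r : ℝ | ∃ a ∈ A, ∃ b ∈ A, r = ρ a b} := by
    ext r
    simp only [Set.mem_smul_set, Set.mem_ofPred_eq, smul_eq_mul]
    grind
  rw [rdiam, image_eq, Real.sSup_smul_of_nonneg hc, smul_eq_mul, rdiam]

theorem le_rdiam {B : ℝ} (hB : ∀ a ∈ A, ∀ b ∈ A, ρ a b ≤ B) {a b : M} (ha : a ∈ A) (hb : b ∈ A) :
    ρ a b ≤ rdiam ρ A := by
  refine le_csSup ⟨B, ?_⟩ ⟨a, ha, b, hb, rfl⟩
  rintro _ ⟨x, hx, y, hy, rfl⟩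
  exact hB x hx y hy

theorem covN_congr {ε δ : ℝ} (h : ∀ U, rdiam ρ U < ε ↔ rdiam σ U < δ) (X : Set M) :
    covN X ρ ε = covN X σ δ := by
  simp only [covN, h]

end CoveringNumber

section DynamicalMetric

variable {M : Type*} [MetricSpace M] {f : Equiv.Perm M} {m n : ℕ} {x y : M}

theorem dist_zpow_le_dFn {k : ℤ} (hk : |k| ≤ n) :
    dist ((f ^ k) x) ((f ^ k) y) ≤ dFn f n x y := by
  have finite_values : {r : ℝ | ∃ k : ℤ, |k| ≤ (n : ℤ) ∧
      r = dist ((f ^ k) x) ((f ^ k) y)}.Finite := by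
    refine ((Set.finite_Icc (-n : ℤ) n).image
      fun k ↦ dist ((f ^ k) x) ((f ^ k) y)).subset ?_
    rintro _ ⟨k, hk, rfl⟩
    exact ⟨k, abs_le.mp hk, rfl⟩
  exact le_csSup finite_values.bddAbove ⟨k, hk, rfl⟩

theorem dFn_le_iff {B : ℝ} :
    dFn f n x y ≤ B ↔ ∀ k : ℤ, |k| ≤ n → dist ((f ^ k) x) ((f ^ k) y) ≤ B := by
  refine ⟨fun h k hk ↦ (dist_zpow_le_dFn hk).trans h, fun h ↦ ?_⟩
  refine csSup_le ⟨_, 0, by simp, rfl⟩ ?_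
  rintro _ ⟨k, hk, rfl⟩
  exact h k hk

theorem dFn_zero (f : Equiv.Perm M) (x y : M) : dFn f 0 x y = dist x y :=
  eq_of_forall_ge_iff fun B ↦ by simp [dFn_le_iff]

theorem dFn_mono (h : m ≤ n) : dFn f m x y ≤ dFn f n x y :=
  dFn_le_iff.mpr fun _ hk ↦ dist_zpow_le_dFn (hk.trans (by exact_mod_cast h))

theorem dFn_one (f : Equiv.Perm M) (x y : M) :
    dFn f 1 x y = max (dist x y) (max (dist (f x) (f y)) (dist (f.symm x) (f.symm y))) := by
  refine eq_of_forall_ge_iff fun B ↦ ?_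
  have abs_le_one_iff (k : ℤ) : |k| ≤ 1 ↔ k = 0 ∨ k = 1 ∨ k = -1 := by grind
  simp [dFn_le_iff, abs_le_one_iff, ← Equiv.Perm.inv_def]

theorem dFn_add_le_iff {B : ℝ} :
    dFn f (m + n) x y ≤ B ↔ ∀ i : ℤ, |i| ≤ m → dFn f n ((f ^ i) x) ((f ^ i) y) ≤ B := by
  simp only [dFn_le_iff, ← Equiv.Perm.mul_apply, ← zpow_add]
  constructor
  · intro h i hi j hj
    exact h (j + i) (by push_cast; grind)
  · intro h k hk
    -- `i` is `k` clamped to `[-m, m]`.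
    obtain ⟨i, j, hi, hj, rfl⟩ : ∃ i j : ℤ, |i| ≤ m ∧ |j| ≤ n ∧ j + i = k :=
      ⟨max (-m : ℤ) (min k m), k - max (-m : ℤ) (min k m), by grind, by grind, by grind⟩
    exact h i hi j hj

theorem dFn_le_diam [BoundedSpace M] (f : Equiv.Perm M) (n : ℕ) (x y : M) :
    dFn f n x y ≤ Metric.diam (Set.univ : Set M) :=
  dFn_le_iff.mpr fun _ _ ↦
    Metric.dist_le_diam_of_mem (Bornology.IsBounded.all _) (Set.mem_univ _) (Set.mem_univ _)

end DynamicalMetric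

/-- The metric of `M` is self-similar for `f` with constant `ξ` and expanding factor `lam`. The
requirements `0 < ξ` and `1 < lam` are not part of the definition. -/
def IsSelfSimilarDist {M : Type*} [MetricSpace M] (f : Equiv.Perm M) (ξ lam : ℝ) : Prop :=
  ∀ p q : M, dist p q ≤ ξ →
    max (dist (f p) (f q)) (dist (f.symm p) (f.symm q)) = lam * dist p q

namespace IsSelfSimilarDist

variable {M : Type*} [MetricSpace M] {f : Equiv.Perm M} {ξ lam : ℝ} {n : ℕ} {x y : M}

theorem dFn_one_eq_mul_dist (h : IsSelfSimilarDist f ξ lam) (hlam : 1 ≤ lam) (hxy : dist x y ≤ ξ) :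
    dFn f 1 x y = lam * dist x y := by
  rw [dFn_one, h x y hxy, max_eq_right (le_mul_of_one_le_left dist_nonneg hlam)]

theorem dFn_succ_eq_mul_dFn (h : IsSelfSimilarDist f ξ lam) (hlam : 1 ≤ lam)
    (hxy : dFn f n x y ≤ ξ) : dFn f (n + 1) x y = lam * dFn f n x y := by
  have lam_pos : 0 < lam := by positivity
  refine eq_of_forall_ge_iff fun B ↦ ?_
  calc dFn f (n + 1) x y ≤ B
    _ ↔ ∀ i : ℤ, |i| ≤ n → dFn f 1 ((f ^ i) x) ((f ^ i) y) ≤ B := dFn_add_le_iff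
    _ ↔ ∀ i : ℤ, |i| ≤ n → dist ((f ^ i) x) ((f ^ i) y) ≤ B / lam :=
      forall₂_congr fun i hi ↦ by
        rw [h.dFn_one_eq_mul_dist hlam (dFn_le_iff.mp hxy i hi), le_div_iff₀' lam_pos]
    _ ↔ lam * dFn f n x y ≤ B := by rw [← dFn_le_iff, le_div_iff₀' lam_pos]

theorem dFn_eq_pow_mul_dist_of_dFn_le (h : IsSelfSimilarDist f ξ lam) (hlam : 1 ≤ lam)
    (hxy : dFn f n x y ≤ ξ) : dFn f n x y = lam ^ n * dist x y := by
  induction n with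
  | zero => simp [dFn_zero]
  | succ n ih =>
    have hn : dFn f n x y ≤ ξ := (dFn_mono n.le_succ).trans hxy
    rw [h.dFn_succ_eq_mul_dFn hlam hn, ih hn, pow_succ', mul_assoc]

theorem dFn_eq_pow_mul_dist_of_le (h : IsSelfSimilarDist f ξ lam) (hlam : 1 ≤ lam)
    (hxy : lam ^ n * dist x y ≤ ξ) : dFn f n x y = lam ^ n * dist x y := by
  induction n with
  | zero => simp [dFn_zero]
  | succ n ih =>
    have hn : lam ^ n * dist x y ≤ ξ := by
      refine le_trans ?_ hxy
      gcongr
      exact n.le_succ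
    rw [h.dFn_succ_eq_mul_dFn hlam ((ih hn).trans_le hn), ih hn, pow_succ', mul_assoc]

theorem rdiam_dist_lt_iff [BoundedSpace M] (h : IsSelfSimilarDist f ξ lam) (hlam : 1 ≤ lam)
    (n : ℕ) (A : Set M) :
    rdiam (fun a b ↦ dist a b) A < ξ / lam ^ n ↔ rdiam (dFn f n) A < ξ := by
  have lam_pow_pos : 0 < lam ^ n := by positivity
  have rdiam_eq (hA : ∀ a ∈ A, ∀ b ∈ A, dFn f n a b = lam ^ n * dist a b) :
      rdiam (dFn f n) A = lam ^ n * rdiam (fun a b ↦ dist a b) A := by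
    rw [rdiam_congr hA, rdiam_const_mul lam_pow_pos.le]
  rw [lt_div_iff₀' lam_pow_pos]
  constructor
  · intro hA
    have dist_le (a) (ha : a ∈ A) (b) (hb : b ∈ A) :
        dist a b ≤ rdiam (fun a b ↦ dist a b) A :=
      le_rdiam (ρ := fun a b ↦ dist a b) (fun _ hx _ hy ↦
        Metric.dist_le_diam_of_mem (Bornology.IsBounded.all A) hx hy) ha hb
    have dFn_eq (a) (ha : a ∈ A) (b) (hb : b ∈ A) : dFn f n a b = lam ^ n * dist a b :=
      h.dFn_eq_pow_mul_dist_of_le hlam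
        ((mul_le_mul_of_nonneg_left (dist_le a ha b hb) lam_pow_pos.le).trans hA.le)
    rwa [rdiam_eq dFn_eq]
  · intro hA
    have dFn_eq (a) (ha : a ∈ A) (b) (hb : b ∈ A) : dFn f n a b = lam ^ n * dist a b :=
      h.dFn_eq_pow_mul_dist_of_dFn_le hlam
        ((le_rdiam (fun x _ y _ ↦ dFn_le_diam f n x y) ha hb).trans hA.le)
    rwa [← rdiam_eq dFn_eq]

end IsSelfSimilarDist

theorem stmt_10_general {M : Type*} [MetricSpace M] [BoundedSpace M] {f : Equiv.Perm M}
    {ξ lam : ℝ} (hlam : 1 ≤ lam) (hss : IsSelfSimilarDist f ξ lam) (k : ℕ) (X : Set M) :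
    covN X (fun a b ↦ dist a b) (ξ / lam ^ k) = covN X (dFn f k) ξ :=
  covN_congr (hss.rdiam_dist_lt_iff hlam k) X

theorem stmt_10 {M : Type*} [MetricSpace M] [CompactSpace M]
    (f : Equiv.Perm M) (hf : Continuous f) (hf' : Continuous f.symm)
    (ξ lam : ℝ) (hξ : 0 < ξ) (hlam : 1 < lam)
    (hexp : ∀ x y : M, x ≠ y → ∃ n : ℤ, ξ < dist ((f ^ n) x) ((f ^ n) y))
    (hss : ∀ p q : M, dist p q ≤ ξ →
      max (dist (f p) (f q)) (dist (f.symm p) (f.symm q)) = lam * dist p q) :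
    ∀ (k : ℕ) (X : Set M),
      covN X (fun a b => dist a b) (ξ / lam ^ k) = covN X (dFn f k) ξ :=
  stmt_10_general hlam.le hss
end
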